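/- arXiv:2505.21989 — 3 statements merged into one kernel-verified Lean document; each statement's English description precedes it below -/
import Mathlib

section
/- For all integers n ≥ 0, the number of (4,9)-regular overpartitions satisfies R̄_{4,9}(18n+15) ≡ 0 (mod 16). -/
/-- Number of partitions of `a` with no part divisible by `ℓ` or `μ`
(the non-overlined parts of an `(ℓ,μ)`-regular overpartition). -/
def regularCount (ℓ μ a : ℕ) : ℕ :=
  Fintype.card {p : a.Partition // ∀ i ∈ p.parts, ¬ ℓ ∣ i ∧ ¬ μ ∣ i}

/-- Number of partitions of `a` into distinct parts with no part divisible by `ℓ` or `μ`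
(the overlined parts of an `(ℓ,μ)`-regular overpartition). -/
def regularDistinctCount (ℓ μ a : ℕ) : ℕ :=
  Fintype.card {p : a.Partition // p.parts.Nodup ∧ ∀ i ∈ p.parts, ¬ ℓ ∣ i ∧ ¬ μ ∣ i}

/-- `Rbar ℓ μ n` is the number of `(ℓ,μ)`-regular overpartitions of `n`: pairs `(λ, δ)`
where `λ` is a partition, `δ` is a partition into distinct parts, `|λ| + |δ| = n`,
and no part of `λ` or `δ` is divisible by `ℓ` or by `μ`. -/
def Rbar (ℓ μ n : ℕ) : ℕ :=
  ∑ ab ∈ Finset.HasAntidiagonal.antidiagonal n, regularCount ℓ μ ab.1 * regularDistinctCount ℓ μ ab.2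


lemma tele {R : Type*} [CommRing R] (x y : R) (V b : ℕ → R) (hV0 : V 0 = 1) (hb0 : b 0 = 1)
    (h1 : ∀ m, b (m+1) * (1 + x^(m+1)) = 2 * V (m+1))
    (h2 : ∀ m, b (m+1) * (1 - x^(m+1)) = 2 * V m) (m : ℕ) :
    ∑ s ∈ Finset.range (m+1), (-1)^s * b s * y^s * ((1-y) * x^s - (1+y))
      = -2 * (-1)^m * y^(m+1) * V m := by
  induction m with
  | zero => simp [hV0, hb0]; ring
  | succ m ih =>
    rw [Finset.sum_range_succ, ih]
    linear_combination (-(-1)^(m+1) * y^(m+1)) * h2 m - (-1)^(m+1) * y^(m+2) * h1 m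

lemma finite_gauss {R : Type*} [CommRing R] (x : R) (V b w : ℕ → R) (hV0 : V 0 = 1) (hb0 : b 0 = 1)
    (hw : ∀ m, (1 - x^(m+1)) * w m = 1)
    (hV : ∀ m, V (m+1) * (1 - x^(m+1)) = V m * (1 + x^(m+1)))
    (h1 : ∀ m, b (m+1) * (1 + x^(m+1)) = 2 * V (m+1))
    (h2 : ∀ m, b (m+1) * (1 - x^(m+1)) = 2 * V m) (n : ℕ) :
    (1 + 2 * ∑ j ∈ Finset.range n, (-1)^(j+1) * x^((j+1)^2)) * V n =
     ∑ s ∈ Finset.range (n+1), (-1)^s * b s * (x^(n+1))^s := by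
  induction n with
  | zero => simp [hV0, hb0]
  | succ n ih =>
    have hu : IsUnit (1 - x^(n+1)) := IsUnit.of_mul_eq_one _ (hw n)
    apply hu.mul_left_cancel
    have t := tele x (x^(n+1)) V b hV0 hb0 h1 h2 (n+1)
    simp only [mul_sub, Finset.sum_sub_distrib] at t
    rw [Finset.sum_range_succ _ (n+1)] at t
    have e1 : (1 - x^(n+1)) * ∑ s ∈ Finset.range (n+1+1), (-1)^s * b s * (x^(n+1+1))^s
       = ∑ s ∈ Finset.range (n+1+1), (-1)^s * b s * (x^(n+1))^s * ((1-x^(n+1)) * x^s) := by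
      rw [Finset.mul_sum]; refine Finset.sum_congr rfl fun s _ => ?_
      ring
    have e2 : ∑ s ∈ Finset.range (n+1), (-1)^s * b s * (x^(n+1))^s * (1+x^(n+1))
       = (1+x^(n+1)) * ∑ s ∈ Finset.range (n+1), (-1)^s * b s * (x^(n+1))^s := by
      rw [Finset.mul_sum]; refine Finset.sum_congr rfl fun s _ => ?_
      ring
    rw [Finset.sum_range_succ _ (n+1)] at t
    rw [e1, Finset.sum_range_succ _ (n+1)]
    rw [e2, ← ih] at t
    rw [Finset.sum_range_succ _ n]
    set Z := ∑ s ∈ Finset.range (n+1), (-1)^s * b s * (x^(n+1))^s * ((1-x^(n+1)) * x^s)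
    set S := ∑ j ∈ Finset.range n, (-1)^(j+1) * x^((j+1)^2)
    have hVn := hV n
    have h1n := h1 n
    linear_combination (1 + 2 * S) * hVn - t - ((-1)^(n+1) * (x^(n+1))^(n+1)) * h1n

open PowerSeries PowerSeries.WithPiTopology in
noncomputable def fac (ε : ℤ) (p : ℕ → Prop) [DecidablePred p] (i : ℕ) : PowerSeries ℤ :=
  if p (i+1) then 1 + PowerSeries.C ε * PowerSeries.X^(i+1) else 1

section prods
open PowerSeries PowerSeries.WithPiTopology

lemma fac_mult (ε : ℤ) (p : ℕ → Prop) [DecidablePred p] : Multipliable (fac ε p) := by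
  have : fac ε p = fun i => 1 + (if p (i+1) then C ε * X^(i+1) else 0) := by
    funext i; unfold fac; split_ifs <;> simp
  rw [this]
  apply multipliable_one_add_of_tendsto_order_atTop_nhds_top
  refine ENat.tendsto_nhds_top_iff_natCast_lt.mpr (fun n => Filter.eventually_atTop.mpr ⟨n, ?_⟩)
  intro m hm
  refine lt_of_lt_of_le (b := ((m+1 : ℕ) : ℕ∞)) (by exact_mod_cast Nat.lt_succ_of_le hm) ?_
  apply PowerSeries.nat_le_order
  intro i hi
  split_ifs
  · rw [coeff_C_mul, coeff_X_pow, if_neg (by omega), mul_zero]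
  · simp

lemma restr_gen (p : ℕ → Prop) [DecidablePred p] :
    (PowerSeries.mk fun n ↦ ((Nat.Partition.restricted n p).card : ℤ)) * ∏' i, fac (-1) p i = 1 := by
  rw [Nat.Partition.powerSeriesMk_card_restricted_eq_tprod,
    ← (Nat.Partition.multipliable_powerSeriesMk_card_restricted ℤ p).tprod_mul (fac_mult _ _)]
  refine Eq.trans (tprod_congr ?_) (tprod_one (β := ℕ))
  intro i
  unfold fac
  split_ifs
  · have := tsum_pow_mul_one_sub_of_constantCoeff_eq_zero (f := (X : PowerSeries ℤ)^(i+1)) (by simp)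
    simpa [pow_mul, sub_eq_add_neg] using this
  · simp

lemma dist_gen (p : ℕ → Prop) [DecidablePred p] :
    (PowerSeries.mk fun n ↦ ((Finset.univ.filter fun x : n.Partition => x.parts.Nodup ∧ ∀ i ∈ x.parts, p i).card : ℤ))
      = ∏' i, fac 1 p i := by
  symm
  have := Nat.Partition.hasProd_genFun (fun i c ↦ if (c ≤ 1 ∧ p i) then (1 : ℤ) else 0)
  convert this.tprod_eq using 1
  · congr 1
    funext i
    unfold fac
    rw [tsum_eq_single 0]
    · by_cases hp : p (i+1) <;> simp [hp]
      · exact (one_smul ℤ _).symm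
      · exact zero_smul ℤ _
    · intro b hb
      rw [if_neg (by omega)]
      exact zero_smul ℤ _
  · simp_rw [Nat.Partition.genFun, Finset.card_filter, Finsupp.prod, Finset.prod_boole]
    ext n
    simp only [coeff_mk, Nat.cast_sum]
    refine Finset.sum_congr rfl fun x _ => ?_
    rw [Nat.cast_ite, Nat.cast_one, Nat.cast_zero]
    refine if_congr ?_ rfl rfl
    rw [Multiset.nodup_iff_count_le_one]
    simp only [Multiset.toFinsupp_support, Multiset.mem_toFinset, Multiset.toFinsupp_apply]
    constructor
    · intro h i hi; exact ⟨h.1 i, h.2 i hi⟩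
    · intro h
      refine ⟨fun a => ?_, fun i hi => (h i hi).2⟩
      by_cases ha : a ∈ x.parts
      · exact (h a ha).1
      · simp [Multiset.count_eq_zero_of_notMem ha]

lemma combine (ε : ℤ) : (∏' i, fac ε (fun k => ¬ 4 ∣ k ∧ ¬ 9 ∣ k) i) * (∏' i, fac ε (fun k => 4 ∣ k) i)
    * (∏' i, fac ε (fun k => 9 ∣ k) i) = (∏' i, fac ε (fun k => 1 ∣ k) i) * (∏' i, fac ε (fun k => 36 ∣ k) i) := by
  rw [← (fac_mult _ _).tprod_mul (fac_mult _ _), ← (fac_mult _ _).tprod_mul (fac_mult _ _),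
    ← ((fac_mult _ _).mul (fac_mult _ _)).tprod_mul (fac_mult _ _)]
  congr 1
  funext i
  unfold fac
  by_cases h4 : 4 ∣ i+1 <;> by_cases h9 : 9 ∣ i+1
  · have : 36 ∣ i+1 := by omega
    simp [h4, h9, this]
  · have : ¬ 36 ∣ i+1 := by omega
    simp [h4, h9, this]
  · have : ¬ 36 ∣ i+1 := by omega
    simp [h4, h9, this]
  · have : ¬ 36 ∣ i+1 := by omega
    simp [h4, h9, this]

lemma reindex (ε : ℤ) (d : ℕ) (hd : 0 < d) :
    HasProd (fun k => 1 + C ε * (X^d : PowerSeries ℤ)^(k+1)) (∏' i, fac ε (fun k => d ∣ k) i) := by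
  have h := (fac_mult ε (fun k => d ∣ k)).hasProd
  have inj : Function.Injective (fun k : ℕ => d * (k+1) - 1) := by
    intro a b hab
    simp only at hab
    have h1 : 0 < d * (a+1) := by positivity
    have h2 : 0 < d * (b+1) := by positivity
    have : d * (a+1) = d * (b+1) := by omega
    have := Nat.eq_of_mul_eq_mul_left hd this
    omega
  rw [← inj.hasProd_iff] at h
  · convert h using 1
    funext k
    have h1 : d * (k+1) - 1 + 1 = d * (k+1) := by
      have : 0 < d * (k+1) := by positivity
      omega
    simp [fac, h1, pow_mul]
  · intro x hx
    have : ¬ d ∣ x + 1 := by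
      rintro ⟨c, hc⟩
      apply hx
      rcases c with _ | c
      · simp at hc
      · exact ⟨c, by simp only; omega⟩
    simp [fac, this]

noncomputable def AA (d : ℕ) : PowerSeries ℤ :=
  PowerSeries.mk fun m => ∑ j ∈ Finset.range m, if d * (j+1)^2 = m then (-1)^(j+1) else 0

lemma AA_tendsto (d : ℕ) (hd : 0 < d) : Filter.Tendsto
    (fun n => ∑ j ∈ Finset.range n, (-1)^(j+1) * ((X : PowerSeries ℤ)^d)^((j+1)^2)) Filter.atTop (nhds (AA d)) := by
  rw [tendsto_iff_coeff_tendsto]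
  intro m
  apply tendsto_atTop_of_eventually_const (i₀ := m)
  intro n hn
  rw [AA, coeff_mk, map_sum]
  symm
  have key : ∀ j, (coeff m) ((-1)^(j+1) * ((X : PowerSeries ℤ)^d)^((j+1)^2)) = if d * (j+1)^2 = m then (-1)^(j+1) else 0 := by
    intro j
    rw [← pow_mul]
    have : ((-1)^(j+1) : PowerSeries ℤ) = C ((-1)^(j+1)) := by simp
    rw [this, coeff_C_mul, coeff_X_pow]
    simp [eq_comm]
  simp_rw [key]
  apply Finset.sum_subset
  · intro a; simp; omega
  · intro j _ hj
    rw [if_neg]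
    intro h
    simp at hj
    nlinarith

lemma gauss (d : ℕ) (hd : 0 < d) : ∏' i, fac (-1) (fun k => d ∣ k) i
    = (1 + 2 * AA d) * ∏' i, fac 1 (fun k => d ∣ k) i := by
  have hE := (reindex (-1) d hd).tendsto_prod_nat
  have hD := (reindex 1 d hd).tendsto_prod_nat
  have hA := ((AA_tendsto d hd).const_mul 2).const_add 1
  set x : PowerSeries ℤ := X^d with hx
  have hcx : constantCoeff x = 0 := by simp [hx, hd.ne']
  have hu : ∀ k, ∃ u, (1 + x^(k+1)) * u = 1 := fun k => by
    apply IsUnit.exists_right_inv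
    rw [PowerSeries.isUnit_iff_constantCoeff]; simp [hcx]
  have hw : ∀ k, ∃ u, (1 - x^(k+1)) * u = 1 := fun k => by
    apply IsUnit.exists_right_inv
    rw [PowerSeries.isUnit_iff_constantCoeff]; simp [hcx]
  choose u hu using hu
  choose w hw using hw
  set V : ℕ → PowerSeries ℤ := fun n => ∏ k ∈ Finset.range n, ((1 + x^(k+1)) * w k) with hVdef
  set b : ℕ → PowerSeries ℤ := fun n => if n = 0 then 1 else 2 * u (n-1) * V n with hbdef
  have hV : ∀ m, V (m+1) * (1 - x^(m+1)) = V m * (1 + x^(m+1)) := by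
    intro m
    simp only [hVdef, Finset.prod_range_succ]
    linear_combination (∏ k ∈ Finset.range m, ((1 + x^(k+1)) * w k)) * (1 + x^(m+1)) * hw m
  have g := finite_gauss x V b w (by simp [hVdef]) (by simp [hbdef]) hw hV
    (by intro m; simp only [hbdef]; simp; linear_combination 2 * V (m+1) * hu m)
    (by intro m; simp only [hbdef]; simp; linear_combination 2 * V m * hu m + 2 * u m * hV m)
  have hEV : ∀ n, (∏ k ∈ Finset.range n, (1 + C (-1) * x^(k+1))) * V n = ∏ k ∈ Finset.range n, (1 + C 1 * x^(k+1)) := by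
    intro n
    rw [hVdef, ← Finset.prod_mul_distrib]
    refine Finset.prod_congr rfl fun k _ => ?_
    simp
    linear_combination (1 + x^(k+1)) * hw k
  have hlim := hA.mul hD
  refine tendsto_nhds_unique ?_ hlim
  have hT : Filter.Tendsto (fun n => ∑ s ∈ Finset.range (n+1), (-1)^s * b s * (x^(n+1))^s) Filter.atTop (nhds 1) := by
    rw [tendsto_iff_coeff_tendsto]
    intro m
    apply tendsto_atTop_of_eventually_const (i₀ := m)
    intro n hn
    rw [Finset.sum_range_succ', map_add, map_sum, Finset.sum_eq_zero]
    · simp [hbdef]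
    · intro s _
      have : (-1)^(s+1) * b (s+1) * (x^(n+1))^(s+1) = (-1)^(s+1) * b (s+1) * X^(d * (n+1) * (s+1)) := by
        rw [hx]; ring
      rw [this, coeff_mul_X_pow', if_neg]
      have : 1 ≤ d * (s+1) := Nat.mul_pos hd (by omega)
      nlinarith
  have := hE.mul hT
  rw [mul_one] at this
  refine this.congr fun n => ?_
  rw [← g, ← hEV]
  ring

lemma prodne (p : ℕ → Prop) [DecidablePred p] : (∏' i, fac 1 p i) ≠ 0 := by
  rw [← dist_gen]
  intro h
  have := congrArg (coeff 0) h
  rw [coeff_mk] at this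
  simp at this

lemma mainEq : (PowerSeries.mk fun n => (Rbar 4 9 n : ℤ)) * (1 + 2 * AA 1) * (1 + 2 * AA 36)
    = (1 + 2 * AA 4) * (1 + 2 * AA 9) := by
  have hG : (PowerSeries.mk fun n => (Rbar 4 9 n : ℤ)) =
     (PowerSeries.mk fun n ↦ ((Nat.Partition.restricted n (fun k => ¬ 4 ∣ k ∧ ¬ 9 ∣ k)).card : ℤ)) *
      ∏' i, fac 1 (fun k => ¬ 4 ∣ k ∧ ¬ 9 ∣ k) i := by
    rw [← dist_gen]
    ext n
    rw [coeff_mul]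
    simp only [coeff_mk, Rbar, regularCount, regularDistinctCount, Nat.cast_sum, Nat.cast_mul,
      Fintype.card_subtype, Nat.Partition.restricted]
  have hr := restr_gen (fun k => ¬ 4 ∣ k ∧ ¬ 9 ∣ k)
  have c1 := combine 1
  have c2 := combine (-1)
  have g1 := gauss 1 (by norm_num)
  have g4 := gauss 4 (by norm_num)
  have g9 := gauss 9 (by norm_num)
  have g36 := gauss 36 (by norm_num)
  have n1 := prodne (fun k => 1 ∣ k)
  have n36 := prodne (fun k => 36 ∣ k)
  rw [hG]
  rw [g1, g4, g9, g36] at c2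
  apply mul_right_cancel₀ (mul_ne_zero n1 n36)
  set G := (PowerSeries.mk fun n ↦ ((Nat.Partition.restricted n (fun k => ¬ 4 ∣ k ∧ ¬ 9 ∣ k)).card : ℤ))
  generalize (∏' i, fac 1 (fun k => ¬ 4 ∣ k ∧ ¬ 9 ∣ k) i) = D at *
  generalize (∏' i, fac (-1) (fun k => ¬ 4 ∣ k ∧ ¬ 9 ∣ k) i) = E at *
  generalize (∏' i, fac 1 (fun k => 1 ∣ k) i) = D1 at *
  generalize (∏' i, fac 1 (fun k => 4 ∣ k) i) = D4 at *
  generalize (∏' i, fac 1 (fun k => 9 ∣ k) i) = D9 at *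
  generalize (∏' i, fac 1 (fun k => 36 ∣ k) i) = D36 at *
  linear_combination (-G * D) * c2 + (1 + 2 * AA 4) * (1 + 2 * AA 9) * D4 * D9 * D * hr + (1 + 2 * AA 4) * (1 + 2 * AA 9) * c1

end prods

section parity

lemma sq_mod (x z n : ℕ) (h : 2 * x^2 + z^2 = 18 * n + 15) : x % 3 ≠ 0 ∧ z % 3 ≠ 0 := by
  have h9 : (2 * (x % 9)^2 + (z % 9)^2) % 9 = 6 := by
    have : (2 * x^2 + z^2) % 9 = 6 := by omega
    rw [← this]
    simp [Nat.add_mod, Nat.mul_mod, Nat.pow_mod]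
  have key : ∀ a < 9, ∀ b < 9, (2 * a^2 + b^2) % 9 = 6 → a % 3 ≠ 0 ∧ b % 3 ≠ 0 := by decide
  have := key (x % 9) (Nat.mod_lt _ (by norm_num)) (z % 9) (Nat.mod_lt _ (by norm_num)) h9
  omega

def invol (p : ℕ × ℕ) : ℕ × ℕ :=
  if p.1 % 3 = p.2 % 3 then ((p.1 + 2 * p.2) / 3, ((4 * p.1 - p.2) + (p.2 - 4 * p.1)) / 3)
  else (((p.1 - 2 * p.2) + (2 * p.2 - p.1)) / 3, (4 * p.1 + p.2) / 3)

def TT (N : ℕ) : Finset (ℕ × ℕ) :=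
  (Finset.range (N+1) ×ˢ Finset.range (N+1)).filter fun p => 1 ≤ p.1 ∧ p.2 % 2 = 1 ∧ 2 * p.1^2 + p.2^2 = N

lemma mem_TT (N x z : ℕ) : (x, z) ∈ TT N ↔ 1 ≤ x ∧ z % 2 = 1 ∧ 2 * x^2 + z^2 = N := by
  simp only [TT, Finset.mem_filter, Finset.mem_product, Finset.mem_range]
  constructor
  · exact fun h => h.2
  · intro h
    refine ⟨⟨?_, ?_⟩, h⟩ <;> nlinarith [h.2.2, h.1, sq_nonneg x, sq_nonneg z]

lemma invol_spec (n x z : ℕ) (h : 2 * x^2 + z^2 = 18 * n + 15) :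
    ((x % 3 = z % 3) ∧ 3 * (invol (x, z)).1 = x + 2 * z ∧
      (3 * (invol (x, z)).2 + z = 4 * x ∨ 3 * (invol (x, z)).2 + 4 * x = z)) ∨
    ((x + z) % 3 = 0 ∧ 3 * (invol (x, z)).2 = 4 * x + z ∧
      (3 * (invol (x, z)).1 + 2 * z = x ∨ 3 * (invol (x, z)).1 + x = 2 * z)) := by
  have hm := sq_mod x z n h
  by_cases hc : x % 3 = z % 3
  · left
    simp only [invol, hc, if_true]
    refine ⟨trivial, by omega, ?_⟩
    rcases le_total (4 * x) z with hl | hl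
    · right; omega
    · left; omega
  · right
    have hs : (x + z) % 3 = 0 := by
      have := Nat.mod_lt x (show 0 < 3 by norm_num)
      have := Nat.mod_lt z (show 0 < 3 by norm_num)
      omega
    clear hm
    simp only [invol, hc, if_false]
    refine ⟨hs, by omega, ?_⟩
    rcases le_total x (2 * z) with hl | hl
    · right; omega
    · left; omega

lemma invol_eq (n x z : ℕ) (h : 2 * x^2 + z^2 = 18 * n + 15) :
    2 * (invol (x, z)).1^2 + (invol (x, z)).2^2 = 18 * n + 15 := by
  have hs := invol_spec n x z h
  rw [← h]
  generalize (invol (x, z)).1 = x' at *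
  generalize (invol (x, z)).2 = z' at *
  zify at hs ⊢
  rcases hs with ⟨-, e1, e2⟩ | ⟨-, e1, e2⟩
  · have e3 : (3 * z' : ℤ)^2 = (4 * x - z)^2 := by
      rcases e2 with e | e
      · rw [← e]; ring
      · rw [← e]; ring
    have e4 : (3 * x' : ℤ)^2 = (x + 2 * z)^2 := by rw [e1]
    linarith
  · have e3 : (3 * x' : ℤ)^2 = (x - 2 * z)^2 := by
      rcases e2 with e | e
      · rw [← e]; ring
      · rw [← e]; ring
    have e4 : (3 * z' : ℤ)^2 = (4 * x + z)^2 := by rw [e1]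
    linarith

lemma TT_even (n : ℕ) : ∑ p ∈ TT (18 * n + 15), (1 : ZMod 2) = 0 := by
  refine Finset.sum_involution (fun p _ => invol p) ?_ ?_ ?_ ?_
  · intros; decide
  · rintro ⟨x, z⟩ ha _ hfix
    rw [mem_TT] at ha
    obtain ⟨hx, hz, h⟩ := ha
    have hs := invol_spec n x z h
    rw [hfix] at hs
    simp only at hs
    rcases hs with ⟨-, e1, e2⟩ | ⟨-, e1, e2⟩
    · have : x = z := by omega
      subst this
      have h3 : x^2 = 6 * n + 5 := by omega
      have : x^2 % 3 = 2 := by omega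
      rw [Nat.pow_mod] at this
      have : x % 3 < 3 := Nat.mod_lt _ (by norm_num)
      interval_cases (x % 3) <;> omega
    · omega
  · rintro ⟨x, z⟩ ha
    rw [mem_TT] at ha
    obtain ⟨hx, hz, h⟩ := ha
    have he := invol_eq n x z h
    have hs := invol_spec n x z h
    have hm := sq_mod _ _ n he
    rw [← Prod.mk.eta (p := invol (x, z)), mem_TT]
    refine ⟨by omega, by omega, he⟩
  · rintro ⟨x, z⟩ ha
    rw [mem_TT] at ha
    obtain ⟨hx, hz, h⟩ := ha
    have he := invol_eq n x z h
    have hs := invol_spec n x z h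
    have hm := sq_mod _ _ n he
    have hs' := invol_spec n _ _ he
    rw [Prod.mk.eta] at hs'
    have h1 : (invol (invol (x, z))).1 = x := by
      generalize (invol (invol (x, z))).1 = x'' at *
      generalize (invol (invol (x, z))).2 = z'' at *
      generalize (invol (x, z)).1 = x' at *
      generalize (invol (x, z)).2 = z' at *
      clear he h
      omega
    have h2 : (invol (invol (x, z))).2 = z := by
      generalize (invol (invol (x, z))).1 = x'' at *
      generalize (invol (invol (x, z))).2 = z'' at *
      generalize (invol (x, z)).1 = x' at *
      generalize (invol (x, z)).2 = z' at *
      clear he h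
      omega
    exact Prod.ext h1 h2

lemma sq_char2 (f : ℕ → ZMod 2) (n : ℕ) :
    ∑ p ∈ Finset.HasAntidiagonal.antidiagonal n, f p.1 * f p.2 = if n % 2 = 0 then f (n/2) else 0 := by
  rw [← Finset.sum_filter_add_sum_filter_not _ (fun p => p.1 = p.2)]
  have h0 : ∑ p ∈ (Finset.HasAntidiagonal.antidiagonal n).filter (fun p => ¬ p.1 = p.2), f p.1 * f p.2 = 0 := by
    refine Finset.sum_involution (fun p _ => p.swap) ?_ ?_ ?_ ?_
    · rintro ⟨a, b⟩ _
      simp only [Prod.swap]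
      rw [mul_comm (f b)]
      exact CharTwo.add_self_eq_zero _
    · rintro ⟨a, b⟩ h _ h2
      simp at h h2
      exact h.2 h2.2
    · rintro ⟨a, b⟩ h
      simp at h ⊢
      omega
    · rintro ⟨a, b⟩ _; rfl
  rw [h0, add_zero]
  have hs : ∀ t : ZMod 2, t * t = t := by decide
  split_ifs with hn
  · rw [Finset.sum_eq_single (n/2, n/2)]
    · exact hs _
    · rintro ⟨a, b⟩ h h2
      simp at h h2
      omega
    · intro h
      simp at h
      omega
  · apply Finset.sum_eq_zero
    rintro ⟨a, b⟩ h
    simp at h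
    omega

open PowerSeries

lemma AA_coeff_sq (d x : ℕ) (hd : 0 < d) (hx : 0 < x) : coeff (d * x^2) (AA d) = (-1)^x := by
  rw [AA, coeff_mk, Finset.sum_eq_single (x-1)]
  · rw [Nat.sub_add_cancel hx]; simp
  · intro j _ hj
    rw [if_neg]
    intro h
    have := Nat.eq_of_mul_eq_mul_left hd h
    have := Nat.pow_left_injective (n := 2) (by norm_num) this
    omega
  · intro h
    simp at h
    have : x ≤ d * x^2 := by nlinarith
    omega

lemma AA_coeff_non (d m : ℕ) (h : ∀ x, 0 < x → d * x^2 ≠ m) : coeff m (AA d) = 0 := by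
  rw [AA, coeff_mk]
  apply Finset.sum_eq_zero
  intro j _
  rw [if_neg (h _ (by omega))]

lemma b_sub_a_even (m : ℕ) (h : ∀ z, z % 2 = 1 → z^2 ≠ m) :
    ((coeff m (AA 4 - AA 1) : ℤ) : ZMod 2) = 0 := by
  rw [map_sub]
  by_cases h1 : ∃ x, 0 < x ∧ x^2 = m
  · obtain ⟨x, hx, rfl⟩ := h1
    have hx2 : x % 2 = 0 := by
      by_contra hc
      exact h x (by omega) rfl
    obtain ⟨y, rfl⟩ : ∃ y, x = 2 * y := ⟨x/2, by omega⟩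
    have e1 := AA_coeff_sq 1 (2*y) (by norm_num) hx
    have e4 := AA_coeff_sq 4 y (by norm_num) (by omega)
    rw [show 4 * y^2 = (2*y)^2 by ring] at e4
    rw [one_mul] at e1
    rw [e1, e4]
    push_cast
    rw [show (-1 : ZMod 2) = 1 by decide]
    simp
  · push Not at h1
    rw [AA_coeff_non 1 m (by simpa using h1), AA_coeff_non 4 m]
    · simp
    · intro x hx hm
      exact h1 (2*x) (by omega) (by rw [← hm]; ring)

lemma b_sub_a_odd (z : ℕ) (hz : z % 2 = 1) :
    ((coeff (z^2) (AA 4 - AA 1) : ℤ) : ZMod 2) = 1 := by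
  rw [map_sub]
  have e1 := AA_coeff_sq 1 z (by norm_num) (by omega)
  rw [one_mul] at e1
  rw [e1, AA_coeff_non 4]
  · push_cast
    rw [show (-1 : ZMod 2) = 1 by decide]
    simp
  · intro x _ h
    have h2 : z^2 % 2 = 0 := by omega
    rw [Nat.pow_mod, hz] at h2
    simp at h2

lemma cubic_even (n : ℕ) : (2 : ℤ) ∣ coeff (18 * n + 15) (AA 1 ^ 2 * (AA 4 - AA 1)) := by
  rw [← Nat.cast_ofNat, ← ZMod.intCast_zmod_eq_zero_iff_dvd]
  rw [coeff_mul]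
  push_cast
  have hsq : ∀ i, ((coeff i (AA 1 ^ 2) : ℤ) : ZMod 2)
     = if i % 2 = 0 then ((coeff (i/2) (AA 1) : ℤ) : ZMod 2) else 0 := by
    intro i
    rw [pow_two, coeff_mul]
    push_cast
    exact sq_char2 (fun k => ((coeff k (AA 1) : ℤ) : ZMod 2)) i
  rw [← TT_even n]
  symm
  refine Finset.sum_of_injOn (fun p => (2 * p.1^2, p.2^2)) ?_ ?_ ?_ ?_
  · rintro ⟨x, z⟩ _ ⟨x', z'⟩ _ h
    simp only [Prod.mk.injEq] at h ⊢
    have h1 : x^2 = x'^2 := by omega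
    exact ⟨Nat.pow_left_injective (n := 2) (by norm_num) h1, Nat.pow_left_injective (n := 2) (by norm_num) h.2⟩
  · rintro ⟨x, z⟩ h
    rw [Finset.mem_coe, mem_TT] at h
    simp [h.2.2]
  · rintro ⟨i, j⟩ hij hn
    rw [Finset.HasAntidiagonal.mem_antidiagonal] at hij
    simp only at hij ⊢
    by_cases hz : ∃ z, z % 2 = 1 ∧ z^2 = j
    · obtain ⟨z, hz, rfl⟩ := hz
      rw [hsq]
      split_ifs with hi
      · rw [AA_coeff_non]
        · simp
        · intro x hx hxi
          apply hn
          refine ⟨(x, z), ?_, ?_⟩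
          · rw [Finset.mem_coe, mem_TT]
            exact ⟨hx, hz, by omega⟩
          · simp; omega
      · simp
    · push Not at hz
      rw [b_sub_a_even j hz, mul_zero]
  · rintro ⟨x, z⟩ h
    rw [mem_TT] at h
    simp only
    rw [b_sub_a_odd z h.2.1, hsq, if_pos (by omega), Nat.mul_div_cancel_left _ (by norm_num)]
    have e1 := AA_coeff_sq 1 x (by norm_num) h.1
    rw [one_mul] at e1
    rw [e1]
    push_cast
    rw [show (-1 : ZMod 2) = 1 by decide]
    simp

def Sup (S : Finset (ZMod 9)) (f : PowerSeries ℤ) : Prop := ∀ n, coeff n f ≠ 0 → (n : ZMod 9) ∈ S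

lemma Sup.mul {S T U : Finset (ZMod 9)} {f g : PowerSeries ℤ} (hf : Sup S f) (hg : Sup T g)
    (h : ∀ s ∈ S, ∀ t ∈ T, s + t ∈ U) : Sup U (f * g) := by
  intro n hn
  rw [coeff_mul] at hn
  obtain ⟨⟨i, j⟩, hij, hne⟩ := Finset.exists_ne_zero_of_sum_ne_zero hn
  rw [Finset.HasAntidiagonal.mem_antidiagonal] at hij
  simp only at hij hne
  rw [← hij]
  push_cast
  exact h _ (hf i (left_ne_zero_of_mul hne)) _ (hg j (right_ne_zero_of_mul hne))

lemma Sup.add {S : Finset (ZMod 9)} {f g : PowerSeries ℤ} (hf : Sup S f) (hg : Sup S g) :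
    Sup S (f + g) := by
  intro n hn
  by_cases h : coeff n f = 0
  · apply hg
    rw [map_add, h, zero_add] at hn
    exact hn
  · exact hf n h

lemma Sup.mono {S T : Finset (ZMod 9)} {f : PowerSeries ℤ} (hf : Sup S f) (h : S ⊆ T) : Sup T f :=
  fun n hn => h (hf n hn)

lemma Sup.C (r : ℤ) : Sup {0} (PowerSeries.C r) := by
  intro n hn
  rw [coeff_C] at hn
  have : n = 0 := by by_contra h; simp [h] at hn
  simp [this]

lemma Sup.AA {S : Finset (ZMod 9)} (d : ℕ) (h : ∀ x : ZMod 9, (d : ZMod 9) * x^2 ∈ S) : Sup S (AA d) := by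
  intro n hn
  by_cases h1 : ∃ x, 0 < x ∧ d * x^2 = n
  · obtain ⟨x, _, rfl⟩ := h1
    push_cast
    exact h _
  · push Not at h1
    exact absurd (AA_coeff_non d n h1) hn

end parity

theorem Rbar_four_nine_18n_15_mod_16 (n : ℕ) :
    Rbar 4 9 (18 * n + 15) ≡ 0 [MOD 16] := by
  have hm := mainEq
  have ha : Sup {0,1,4,7} (AA 1) := Sup.AA 1 (by decide)
  have hb : Sup {0,1,4,7} (AA 4) := Sup.AA 4 (by decide)
  have hc : Sup {0} (AA 9) := Sup.AA 9 (by decide)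
  have hd : Sup {0} (AA 36) := Sup.AA 36 (by decide)
  have hev := cubic_even n
  have hcoef : (PowerSeries.coeff (18 * n + 15)) (PowerSeries.mk fun n => (Rbar 4 9 n : ℤ)) = (Rbar 4 9 (18 * n + 15) : ℤ) :=
    PowerSeries.coeff_mk _ _
  generalize (PowerSeries.mk fun n => (Rbar 4 9 n : ℤ)) = G at hm hcoef
  generalize AA 1 = a at *
  generalize AA 4 = b at *
  generalize AA 9 = c at *
  generalize AA 36 = d at *
  have Zm : ∀ {f g}, Sup {0} f → Sup {0} g → Sup {0} (f * g) := fun hf hg => hf.mul hg (by decide)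
  have Zc : ∀ r : ℤ, Sup {0} (PowerSeries.C r) := Sup.C
  have hw : Sup {0} ((PowerSeries.C 1 + PowerSeries.C 2 * c) *
      (PowerSeries.C 1 + d * (PowerSeries.C (-2) + d * (PowerSeries.C 4 + PowerSeries.C (-8) * d)))) :=
    Zm ((Zc _).add (Zm (Zc _) hc)) ((Zc _).add (Zm hd ((Zc _).add (Zm hd ((Zc _).add (Zm (Zc _) hd))))))
  have Qm : ∀ {f} (r : ℤ), Sup {0,1,2,4,5,7,8} f → Sup {0,1,2,4,5,7,8} (PowerSeries.C r * f) :=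
    fun r hf => (Zc r).mul hf (by decide)
  have hL : Sup {0,1,2,4,5,7,8} (PowerSeries.C 1 + (PowerSeries.C 2 * b + (PowerSeries.C (-2) * a
      + (PowerSeries.C 4 * (a * a) + PowerSeries.C (-4) * (a * b))))) := by
    refine ((Zc _).mono (by decide)).add ((Qm _ (hb.mono (by decide))).add ((Qm _ (ha.mono (by decide))).add
      ((Qm _ (ha.mul ha (by decide))).add (Qm _ (ha.mul hb (by decide))))))
  have hwL : Sup {0,1,2,4,5,7,8} _ := hw.mul hL (by decide)
  have h0 := hwL (18 * n + 15)
  rw [not_imp_comm] at h0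
  have h6 : ((18 * n + 15 : ℕ) : ZMod 9) = 6 := by
    push_cast
    rw [show (18 : ZMod 9) = 0 by decide, show (15 : ZMod 9) = 6 by decide]; ring
  specialize h0 (by rw [h6]; decide)
  simp only [map_neg, map_ofNat, map_one] at h0
  have hG : G = ((1 + 2 * c) * (1 + d * (-2 + d * (4 + -8 * d)))) * (1 + (2 * b + (-2 * a + (4 * (a * a) + -4 * (a * b)))))
    + (PowerSeries.C 8) * (a^2 * (b - a)) + PowerSeries.C 16 * ((c + (1 + 2 * c) * (-d + 2 * d^2 - 4 * d^3)) * (a^2 * (b - a))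
      - ((1 + 2 * c) * (1 + d * (-2 + d * (4 + -8 * d)))) * a^3 * b + (a^4 + d^4 - 16 * a^4 * d^4) * G) := by
    simp only [map_ofNat]
    linear_combination (1 - 2 * a + 4 * a^2 - 8 * a^3) * (1 - 2 * d + 4 * d^2 - 8 * d^3) * hm
  rw [hG, map_add, map_add, h0, PowerSeries.coeff_C_mul, PowerSeries.coeff_C_mul] at hcoef
  rw [Nat.modEq_zero_iff_dvd]
  zify
  rw [← hcoef]
  omega
end

section
/- Let ℓ, μ ≥ 2 be coprime integers. For all integers n ≥ 1, the number of (ℓ,μ)-regular overpartitions satisfies R̄_{ℓ,μ}(n) ≡ 0 (mod 2). -/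
noncomputable section RbarAux
open Classical

def rbF1 (P : ℕ → Prop) (a : ℕ) : Finset (Multiset ℕ) :=
  (Finset.univ.filter (fun p : a.Partition => ∀ i ∈ p.parts, P i)).image (fun p => p.parts)

def rbF2 (P : ℕ → Prop) (a : ℕ) : Finset (Multiset ℕ) :=
  (Finset.univ.filter (fun p : a.Partition => p.parts.Nodup ∧ ∀ i ∈ p.parts, P i)).image
    (fun p => p.parts)

lemma mem_rbF1 (P : ℕ → Prop) (a : ℕ) (M : Multiset ℕ) :
    M ∈ rbF1 P a ↔ M.sum = a ∧ ∀ i ∈ M, 0 < i ∧ P i := by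
  simp only [rbF1, Finset.mem_image, Finset.mem_filter, Finset.mem_univ, true_and]
  constructor
  · rintro ⟨p, hp, rfl⟩
    exact ⟨p.parts_sum, fun i hi => ⟨p.parts_pos hi, hp i hi⟩⟩
  · rintro ⟨h, h'⟩
    exact ⟨⟨M, fun {i} hi => (h' i hi).1, h⟩, fun i hi => (h' i hi).2, rfl⟩

lemma mem_rbF2 (P : ℕ → Prop) (a : ℕ) (M : Multiset ℕ) :
    M ∈ rbF2 P a ↔ M.sum = a ∧ M.Nodup ∧ ∀ i ∈ M, 0 < i ∧ P i := by
  simp only [rbF2, Finset.mem_image, Finset.mem_filter, Finset.mem_univ, true_and]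
  constructor
  · rintro ⟨p, hp, rfl⟩
    exact ⟨p.parts_sum, hp.1, fun i hi => ⟨p.parts_pos hi, hp.2 i hi⟩⟩
  · rintro ⟨h, hn, h'⟩
    exact ⟨⟨M, fun {i} hi => (h' i hi).1, h⟩, ⟨hn, fun i hi => (h' i hi).2⟩, rfl⟩

lemma card_rbF1 (ℓ μ a : ℕ) :
    regularCount ℓ μ a = (rbF1 (fun i => ¬ ℓ ∣ i ∧ ¬ μ ∣ i) a).card := by
  rw [rbF1, Finset.card_image_of_injective _ (fun p q h => Nat.Partition.ext h), regularCount,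
    Fintype.card_subtype]
  congr

lemma card_rbF2 (ℓ μ a : ℕ) :
    regularDistinctCount ℓ μ a = (rbF2 (fun i => ¬ ℓ ∣ i ∧ ¬ μ ∣ i) a).card := by
  rw [rbF2, Finset.card_image_of_injective _ (fun p q h => Nat.Partition.ext h),
    regularDistinctCount, Fintype.card_subtype]
  congr

def rbS (P : ℕ → Prop) (n : ℕ) : Finset (Multiset ℕ × Multiset ℕ) :=
  (Finset.HasAntidiagonal.antidiagonal n).biUnion (fun ab => rbF1 P ab.1 ×ˢ rbF2 P ab.2)

lemma mem_rbS (P : ℕ → Prop) (n : ℕ) (x : Multiset ℕ × Multiset ℕ) :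
    x ∈ rbS P n ↔ (x.1 + x.2).sum = n ∧ x.2.Nodup ∧ ∀ i ∈ x.1 + x.2, 0 < i ∧ P i := by
  simp only [rbS, Finset.mem_biUnion, Finset.mem_product, mem_rbF1, mem_rbF2,
    Finset.HasAntidiagonal.mem_antidiagonal, Multiset.mem_add, Multiset.sum_add]
  constructor
  · rintro ⟨⟨a, b⟩, h, ⟨h1, h2⟩, h3, h4, h5⟩
    refine ⟨by simp_all, h4, ?_⟩
    rintro i (hi | hi)
    exacts [h2 i hi, h5 i hi]
  · rintro ⟨h, h1, h2⟩
    exact ⟨(x.1.sum, x.2.sum), h, ⟨rfl, fun i hi => h2 i (Or.inl hi)⟩, rfl, h1,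
      fun i hi => h2 i (Or.inr hi)⟩

lemma card_rbS (ℓ μ n : ℕ) :
    Rbar ℓ μ n = (rbS (fun i => ¬ ℓ ∣ i ∧ ¬ μ ∣ i) n).card := by
  rw [rbS, Finset.card_biUnion, Rbar]
  · simp only [Finset.card_product, card_rbF1, card_rbF2]
  · rintro ⟨a, b⟩ _ ⟨c, d⟩ _ hne
    refine Finset.disjoint_left.2 ?_
    rintro ⟨A, B⟩ h1 h2
    simp only [Finset.mem_product, mem_rbF1, mem_rbF2] at h1 h2
    apply hne
    rw [← h1.1.1, ← h1.2.1, ← h2.1.1, ← h2.2.1]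

def rbM (M : Multiset ℕ) : ℕ := if h : ∃ m, m ∈ M then h.choose else 0

lemma rbM_mem (M : Multiset ℕ) (h : M ≠ 0) : rbM M ∈ M := by
  have h' := Multiset.exists_mem_of_ne_zero h
  rw [rbM, dif_pos h']
  exact h'.choose_spec

def rbG (x : Multiset ℕ × Multiset ℕ) : Multiset ℕ × Multiset ℕ :=
  if rbM (x.1 + x.2) ∈ x.2 then (rbM (x.1 + x.2) ::ₘ x.1, x.2.erase (rbM (x.1 + x.2)))
  else (x.1.erase (rbM (x.1 + x.2)), rbM (x.1 + x.2) ::ₘ x.2)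

lemma rbG_spec (A B : Multiset ℕ) (h : A + B ≠ 0) (hB : B.Nodup) :
    (rbG (A, B)).1 + (rbG (A, B)).2 = A + B ∧ (rbG (A, B)).2.Nodup ∧ rbG (A, B) ≠ (A, B) ∧
      rbG (rbG (A, B)) = (A, B) := by
  have hm := rbM_mem _ h
  by_cases hmB : rbM (A + B) ∈ B
  · have e : rbG (A, B) = (rbM (A + B) ::ₘ A, B.erase (rbM (A + B))) := by simp [rbG, hmB]
    have e2 : (rbM (A + B) ::ₘ A) + B.erase (rbM (A + B)) = A + B := by
      rw [Multiset.cons_add, ← Multiset.add_cons, Multiset.cons_erase hmB]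
    refine ⟨by rw [e]; exact e2, by rw [e]; exact hB.erase _, ?_, ?_⟩
    · rw [e]; intro h; have := congrArg (fun x => Multiset.card x.1) h; simp at this
    · rw [e, rbG]
      simp only [e2]
      rw [if_neg hB.notMem_erase, Multiset.erase_cons_head, Multiset.cons_erase hmB]
  · have hmA : rbM (A + B) ∈ A := (Multiset.mem_add.1 hm).resolve_right hmB
    have e : rbG (A, B) = (A.erase (rbM (A + B)), rbM (A + B) ::ₘ B) := by simp [rbG, hmB]
    have e2 : A.erase (rbM (A + B)) + (rbM (A + B) ::ₘ B) = A + B := by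
      rw [Multiset.add_cons, ← Multiset.cons_add, Multiset.cons_erase hmA]
    refine ⟨by rw [e]; exact e2, by rw [e]; exact Multiset.nodup_cons.2 ⟨hmB, hB⟩, ?_, ?_⟩
    · rw [e]; intro h; have := congrArg (fun x => Multiset.card x.2) h; simp at this
    · rw [e, rbG]
      simp only [e2]
      rw [if_pos (Multiset.mem_cons_self _ _), Multiset.erase_cons_head, Multiset.cons_erase hmA]

lemma rbS_even (P : ℕ → Prop) (n : ℕ) (hn : 1 ≤ n) : ((rbS P n).card : ZMod 2) = 0 := by
  have key : ∀ x ∈ rbS P n, (rbG x).1 + (rbG x).2 = x.1 + x.2 ∧ (rbG x).2.Nodup ∧ rbG x ≠ x ∧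
      rbG (rbG x) = x := by
    rintro ⟨A, B⟩ hx
    rw [mem_rbS] at hx
    refine rbG_spec A B ?_ hx.2.1
    intro h
    have := hx.1
    simp only [h, Multiset.sum_zero] at this
    omega
  have := Finset.sum_involution (s := rbS P n) (f := fun _ => (1 : ZMod 2)) (fun x _ => rbG x)
    (fun _ _ => by decide) (fun x hx _ => (key x hx).2.2.1)
    (fun x hx => by
      have h := (mem_rbS _ _ _).1 hx
      obtain ⟨k1, k2, -, -⟩ := key x hx
      rw [mem_rbS, k1]
      exact ⟨h.1, k2, h.2.2⟩) (fun x hx => (key x hx).2.2.2)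
  simpa using this

end RbarAux

theorem Rbar_even (ℓ μ : ℕ) (hℓ : 2 ≤ ℓ) (hμ : 2 ≤ μ) (hcop : Nat.Coprime ℓ μ)
    (n : ℕ) (hn : 1 ≤ n) :
    Rbar ℓ μ n ≡ 0 [MOD 2] := by
  rw [← ZMod.natCast_eq_natCast_iff, card_rbS, rbS_even _ _ hn]
  simp
end

section
/- For all integers n ≥ 0, R̄_{4,3}(2n) = pp̄_o(n); that is, the number of (4,3)-regular overpartitions of 2n equals the number of overpartition pairs of n into odd parts. -/
/-- Number of partitions of `a` into odd parts. -/
def oddCount (a : ℕ) : ℕ :=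
  Fintype.card {p : a.Partition // ∀ i ∈ p.parts, Odd i}

/-- Number of partitions of `a` into distinct odd parts. -/
def oddDistinctCount (a : ℕ) : ℕ :=
  Fintype.card {p : a.Partition // p.parts.Nodup ∧ ∀ i ∈ p.parts, Odd i}

/-- Number of overpartitions of `a` into odd parts: pairs `(λ, δ)` with `λ` a partition
into odd parts, `δ` a partition into distinct odd parts, and `|λ| + |δ| = a`. -/
def overOdd (a : ℕ) : ℕ :=
  ∑ ab ∈ Finset.HasAntidiagonal.antidiagonal a, oddCount ab.1 * oddDistinctCount ab.2

/-- `ppo n` is the number of overpartition pairs of `n` into odd parts: quadruples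
`(λ₁, δ₁, λ₂, δ₂)` where `λ₁, λ₂` are partitions into odd parts, `δ₁, δ₂` are partitions
into distinct odd parts, and `|λ₁| + |δ₁| + |λ₂| + |δ₂| = n`. -/
def ppo (n : ℕ) : ℕ :=
  ∑ ab ∈ Finset.HasAntidiagonal.antidiagonal n, overOdd ab.1 * overOdd ab.2

section Gauss
variable {R : Type*} [CommRing R] (q : R) (v p : ℕ → R)

/-- the ratio `(q)_N^2 / ((q)_{N-j} (q)_{N+j})` -/
def cc (N j : ℕ) : R := ∏ i ∈ Finset.range j, ((1 - q ^ (N - i)) * v (N + i + 1))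

lemma cc_succ (N j : ℕ) : cc q v N (j+1) = cc q v N j * ((1 - q ^ (N - j)) * v (N + j + 1)) := by
  simp [cc, Finset.prod_range_succ]

lemma cc_level (hv : ∀ m, 0 < m → v m * (1 - q ^ m) = 1) (N j : ℕ) (hj : j ≤ N + 1) :
    cc q v N j * (1 - q ^ (N+1)) ^ 2
      = cc q v (N+1) j * ((1 - q ^ (N + 1 - j)) * (1 - q ^ (N + 1 + j))) := by
  induction j with
  | zero => simp [cc]; ring
  | succ j ih =>
    have ih := ih (by omega)
    rw [cc_succ, cc_succ]
    have h1 := hv (N + 1 + j) (by omega)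
    have h2 := hv (N + 1 + j + 1) (by omega)
    have e1 : N + 1 - (j + 1) = N - j := by omega
    have e2 : N + 1 + (j + 1) = N + 1 + j + 1 := by omega
    have e3 : N + j + 1 = N + 1 + j := by omega
    rw [e1, e2, e3]
    linear_combination (1 - q ^ (N - j)) * v (N + 1 + j) * ih
      + cc q v (N+1) j * (1 - q ^ (N+1-j)) * (1 - q ^ (N - j)) * h1
      - cc q v (N+1) j * (1 - q ^ (N+1-j)) * (1 - q ^ (N - j)) * h2

def tt (N j : ℕ) : R := (-1) ^ j * q ^ (j ^ 2) * cc q v N j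

def wt (j : ℕ) : R := if j = 0 then 1 else 2

def SS (N : ℕ) : R := ∑ j ∈ Finset.range (N+1), wt j * tt q v N j

lemma tt_succ (hv : ∀ m, 0 < m → v m * (1 - q ^ m) = 1) (N j : ℕ) :
    tt q v N (j+1) * (1 - q ^ (N + j + 1)) = - q ^ (2 * j + 1) * (1 - q ^ (N - j)) * tt q v N j := by
  have h := hv (N + j + 1) (by omega)
  unfold tt
  rw [cc_succ]
  have e : q ^ ((j+1)^2) = q ^ (j^2) * q ^ (2 * j + 1) := by rw [← pow_add]; congr 1; ring
  rw [e, pow_succ (-1 : R)]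
  linear_combination (- (-1) ^ j * q ^ (j ^ 2) * q ^ (2*j+1) * cc q v N j * (1 - q ^ (N - j))) * h

lemma partial_sum (hv : ∀ m, 0 < m → v m * (1 - q ^ m) = 1) (N J : ℕ) (hJ : J ≤ N + 1) :
    (1 - q ^ (N+1)) * ∑ j ∈ Finset.range (J+1),
      wt j * ((1 + q ^ (N+1)) * tt q v (N+1) j - (1 - q ^ (N+1)) * tt q v N j)
      = 2 * tt q v (N+1) J * q ^ (N+1) * (q ^ J - q ^ (N+1)) := by
  induction J with
  | zero => simp [wt, tt, cc]; ring
  | succ J ih =>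
    have ih := ih (by omega)
    rw [Finset.sum_range_succ, mul_add, ih]
    have hl : tt q v N (J+1) * (1 - q ^ (N+1)) ^ 2
      = tt q v (N+1) (J+1) * ((1 - q ^ (N + 1 - (J+1))) * (1 - q ^ (N + 1 + (J+1)))) := by
      unfold tt
      linear_combination (-1) ^ (J+1) * q ^ ((J+1)^2) * cc_level q v hv N (J+1) hJ
    have hs := tt_succ q v hv (N+1) J
    have hw : (wt (J+1) : R) = 2 := by simp [wt]
    rw [hw]
    obtain ⟨k, rfl⟩ : ∃ k, N = J + k := ⟨N - J, by omega⟩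
    have e1 : J + k + 1 - (J + 1) = k := by omega
    have e2 : J + k + 1 - J = k + 1 := by omega
    rw [e1] at hl
    rw [e2] at hs
    linear_combination (-2) * hl + 2 * q ^ k * hs

lemma SS_succ (hv : ∀ m, 0 < m → v m * (1 - q ^ m) = 1)
    (hp : ∀ m, 0 < m → p m * (1 + q ^ m) = 1) (N : ℕ) :
    SS q v (N+1) = SS q v N * ((1 - q ^ (N+1)) * p (N+1)) := by
  have h := partial_sum q v hv N (N+1) le_rfl
  have h0 : tt q v N (N+1) = 0 := by simp [tt, cc_succ]
  have e : ∑ j ∈ Finset.range (N+1+1),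
      wt j * ((1 + q ^ (N+1)) * tt q v (N+1) j - (1 - q ^ (N+1)) * tt q v N j)
      = (1 + q ^ (N+1)) * SS q v (N+1) - (1 - q ^ (N+1)) * SS q v N := by
    have : SS q v N = ∑ j ∈ Finset.range (N+1+1), wt j * tt q v N j := by
      rw [Finset.sum_range_succ, h0]; simp [SS]
    rw [this, SS, Finset.mul_sum, Finset.mul_sum, ← Finset.sum_sub_distrib]
    exact Finset.sum_congr rfl fun _ _ => by ring
  rw [e, sub_self, mul_zero] at h
  have h1 := hv (N+1) (by omega)
  have h2 := hp (N+1) (by omega)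
  set Z := (1 + q ^ (N+1)) * SS q v (N+1) - (1 - q ^ (N+1)) * SS q v N with hZ
  have hz : Z = 0 := by linear_combination v (N+1) * h - Z * h1
  rw [hZ] at hz
  linear_combination p (N+1) * hz - SS q v (N+1) * h2

lemma SS_eq (hv : ∀ m, 0 < m → v m * (1 - q ^ m) = 1)
    (hp : ∀ m, 0 < m → p m * (1 + q ^ m) = 1) (N : ℕ) :
    ∏ i ∈ Finset.range N, ((1 - q ^ (i+1)) * p (i+1)) = SS q v N := by
  induction N with
  | zero => simp [SS, wt, tt, cc]
  | succ N ih => rw [Finset.prod_range_succ, ih, SS_succ q v p hv hp]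

lemma cc_dvd (hv : ∀ m, 0 < m → v m * (1 - q ^ m) = 1) (N M j : ℕ) (hj : j + M ≤ N + 1) :
    q ^ M ∣ cc q v N j - 1 := by
  induction j with
  | zero => simp [cc]
  | succ j ih =>
    rw [cc_succ]
    have h1 : q ^ M ∣ q ^ (N - j) := pow_dvd_pow _ (by omega)
    have h2 : q ^ M ∣ q ^ (N + j + 1) := pow_dvd_pow _ (by omega)
    obtain ⟨a, ha⟩ := ih (by omega)
    obtain ⟨b, hb⟩ := h1
    obtain ⟨c, hc⟩ := h2
    have h := hv (N + j + 1) (by omega)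
    rw [hc] at h
    refine ⟨a * ((1 - q ^ (N - j)) * v (N + j + 1)) - b * v (N+j+1) + c * v (N+j+1), ?_⟩
    linear_combination ((1 - q ^ (N - j)) * v (N + j + 1)) * ha - v (N+j+1) * hb + h

lemma SS_dvd (hv : ∀ m, 0 < m → v m * (1 - q ^ m) = 1) (N : ℕ) :
    q ^ (N+1) ∣ SS q v N - ∑ j ∈ Finset.range (N+1), wt j * ((-1) ^ j * q ^ (j ^ 2)) := by
  rw [SS, ← Finset.sum_sub_distrib]
  refine Finset.dvd_sum fun j hj => ?_
  have hj : j ≤ N := by simpa [Nat.lt_succ_iff] using hj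
  have h := cc_dvd q v hv N (N + 1 - j) j (by omega)
  have h2 : q ^ (N+1) ∣ q ^ (j^2) * q ^ (N+1-j) := by
    rw [← pow_add]; apply pow_dvd_pow; nlinarith [Nat.sub_add_cancel (show j ≤ N + 1 by omega), Nat.le_self_pow (two_ne_zero) j]
  have h3 := (h2.trans (mul_dvd_mul_left _ h)).mul_left (wt j * (-1)^j)
  convert h3 using 1
  unfold tt; ring
end Gauss
section Theta
open PowerSeries PowerSeries.WithPiTopology Filter Topology

lemma summ {ι : Type*} (e : ι → ℕ) (s : ι → ℤ) (h : ∀ d, {i | e i = d}.Finite) :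
    Summable (fun i => (monomial (e i) (s i) : ℤ⟦X⟧)) := by
  rw [summable_iff_summable_coeff]
  intro d
  refine summable_of_hasFiniteSupport ((h d).subset ?_)
  intro i hi
  simp only [Function.mem_support, coeff_monomial] at hi
  by_contra hne
  exact hi (if_neg (fun h => hne h.symm))

def sg (x : ℤ) : ℤ := if Even x then 1 else -1

lemma fin1 (k : ℕ) (hk : 0 < k) (d : ℕ) : {x : ℤ | k * x.natAbs ^ 2 = d}.Finite := by
  refine (Set.finite_Icc (-(d:ℤ)) d).subset ?_
  intro x hx
  simp only [Set.mem_ofPred_eq] at hx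
  have : x.natAbs ≤ d := by nlinarith [Nat.le_self_pow (two_ne_zero) x.natAbs]
  simp only [Set.mem_Icc]; omega

lemma fin2 (k l : ℕ) (hk : 0 < k) (hl : 0 < l) (d : ℕ) :
    {x : ℤ × ℤ | k * x.1.natAbs ^ 2 + l * x.2.natAbs ^ 2 = d}.Finite := by
  refine ((Set.finite_Icc (-(d:ℤ)) d).prod (Set.finite_Icc (-(d:ℤ)) d)).subset ?_
  rintro ⟨x, y⟩ hx
  simp only [Set.mem_ofPred_eq] at hx
  have h1 : x.natAbs ≤ d := by nlinarith [Nat.le_self_pow (two_ne_zero) x.natAbs]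
  have h2 : y.natAbs ≤ d := by nlinarith [Nat.le_self_pow (two_ne_zero) y.natAbs]
  simp only [Set.mem_prod, Set.mem_Icc]; omega

noncomputable def th (s : ℤ → ℤ) (k : ℕ) : ℤ⟦X⟧ := ∑' x : ℤ, monomial (k * x.natAbs ^ 2) (s x)

lemma hasSum_th (s : ℤ → ℤ) (k : ℕ) (hk : 0 < k) :
    HasSum (fun x : ℤ => (monomial (k * x.natAbs ^ 2) (s x) : ℤ⟦X⟧)) (th s k) :=
  (summ _ _ (fin1 k hk)).hasSum

lemma hasSum_th_mul (s t : ℤ → ℤ) (k l : ℕ) (hk : 0 < k) (hl : 0 < l) :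
    HasSum (fun x : ℤ × ℤ => (monomial (k * x.1.natAbs ^ 2 + l * x.2.natAbs ^ 2)
      (s x.1 * t x.2) : ℤ⟦X⟧)) (th s k * th t l) := by
  have h := (hasSum_th s k hk).mul (hasSum_th t l hl) (by
    simp only [monomial_mul_monomial]
    exact summ _ _ (fin2 k l hk hl))
  simpa only [monomial_mul_monomial] using h

lemma coeff_zero_th (s : ℤ → ℤ) (k : ℕ) (hk : 0 < k) : coeff 0 (th s k) = s 0 := by
  have h := (hasSum_iff_hasSum_coeff _).1 (hasSum_th s k hk) 0
  have h2 := hasSum_single (f := fun x : ℤ => coeff 0 (monomial (k * x.natAbs ^ 2) (s x) : ℤ⟦X⟧)) 0 (by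
    intro x hx
    rw [coeff_monomial, if_neg]
    have : 0 < x.natAbs := by omega
    positivity)
  have := h.unique h2
  simpa [coeff_monomial] using this

lemma th_ne_zero (k : ℕ) (hk : 0 < k) : th sg k ≠ 0 := by
  intro h
  have := coeff_zero_th sg k hk
  rw [h] at this
  simp [sg] at this

lemma expand_th (s : ℤ → ℤ) (k : ℕ) (hk : 0 < k) : expand 2 two_ne_zero (th s k) = th s (2 * k) := by
  refine HasSum.unique ?_ (hasSum_th s (2 * k) (by omega))
  rw [hasSum_iff_hasSum_coeff]
  intro d
  rw [coeff_expand]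
  split_ifs with hd
  · obtain ⟨m, rfl⟩ := hd
    have h := (hasSum_iff_hasSum_coeff _).1 (hasSum_th s k hk) m
    rw [Nat.mul_div_cancel_left _ two_pos]
    convert! h using 2 with x
    simp [coeff_monomial, mul_assoc]
  · convert! hasSum_zero using 2 with x
    rw [coeff_monomial, if_neg]
    rintro rfl
    exact hd ⟨_, mul_assoc _ _ _⟩

noncomputable def vv (m : ℕ) : ℤ⟦X⟧ := invOfUnit (1 - X ^ m) 1
noncomputable def pv (m : ℕ) : ℤ⟦X⟧ := invOfUnit (1 + X ^ m) 1

lemma vv_mul (m : ℕ) (hm : 0 < m) : vv m * (1 - X ^ m) = 1 := by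
  rw [mul_comm]; exact mul_invOfUnit _ _ (by simp [hm.ne'])
lemma pv_mul (m : ℕ) (hm : 0 < m) : pv m * (1 + X ^ m) = 1 := by
  rw [mul_comm]; exact mul_invOfUnit _ _ (by simp [hm.ne'])

noncomputable def ww (m : ℕ) : ℤ⟦X⟧ := (1 - X ^ m) * pv m

lemma multipliable_ww (k : ℕ) (hk : 0 < k) : Multipliable (fun i : ℕ => ww (k * (i+1))) := by
  have : (fun i : ℕ => ww (k * (i+1))) = (fun i : ℕ => 1 + (ww (k * (i+1)) - 1)) := by
    ext1 i; ring
  rw [this]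
  apply multipliable_one_add_of_tendsto_order_atTop_nhds_top
  refine ENat.tendsto_nhds_top_iff_natCast_lt.mpr (fun n ↦ Filter.eventually_atTop.mpr ⟨n, ?_⟩)
  intro i hi
  have h : (X : ℤ⟦X⟧) ^ (n + 1) ∣ ww (k * (i+1)) - 1 := by
    refine (pow_dvd_pow X (show n + 1 ≤ k * (i + 1) by nlinarith)).trans ⟨-2 * pv (k * (i+1)), ?_⟩
    have := pv_mul (k * (i+1)) (by positivity)
    unfold ww
    linear_combination this
  have h2 : ((n+1 : ℕ) : ℕ∞) ≤ (ww (k * (i+1)) - 1).order :=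
    nat_le_order _ _ (fun j hj => X_pow_dvd_iff.1 h j hj)
  exact lt_of_lt_of_le (by exact_mod_cast Nat.lt_succ_self n) h2

lemma hasProd_ww (k : ℕ) (hk : 0 < k) : HasProd (fun i : ℕ => ww (k * (i+1))) (th sg k) := by
  obtain ⟨a, ha⟩ := multipliable_ww k hk
  suffices a = th sg k by rwa [this] at ha
  have h1 := ha.tendsto_prod_nat
  have hv : ∀ m, 0 < m → vv (k * m) * (1 - ((X : ℤ⟦X⟧) ^ k) ^ m) = 1 := fun m hm => by
    rw [← pow_mul]; exact vv_mul _ (by positivity)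
  have hp : ∀ m, 0 < m → pv (k * m) * (1 + ((X : ℤ⟦X⟧) ^ k) ^ m) = 1 := fun m hm => by
    rw [← pow_mul]; exact pv_mul _ (by positivity)
  have h2 : ∀ N, ∏ i ∈ Finset.range N, ww (k * (i+1))
      = SS ((X : ℤ⟦X⟧) ^ k) (fun m => vv (k * m)) N := by
    intro N
    rw [← SS_eq _ _ (fun m => pv (k * m)) hv hp]
    refine Finset.prod_congr rfl fun i _ => ?_
    rw [ww, ← pow_mul]
  simp_rw [h2] at h1
  have h3 : HasSum (fun n : ℕ => wt n * ((-1) ^ n * ((X : ℤ⟦X⟧) ^ k) ^ (n^2))) (th sg k) := by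
    have hn := (hasSum_th sg k hk).nat_add_neg
    have h0 := hasSum_ite_eq (0:ℕ) (1 : ℤ⟦X⟧)
    have := hn.sub h0
    convert! this using 1
    · ext1 n
      have : ((-1) ^ n * ((X : ℤ⟦X⟧) ^ k) ^ (n^2)) = monomial (k * n^2) (sg n) := by
        rw [← pow_mul, X_pow_eq]
        rcases Nat.even_or_odd n with h | h
        · simp [h.neg_one_pow, sg, h]
        · have h' : ¬ Even n := by simpa using h
          simp [h.neg_one_pow, sg, h']
      rw [this]
      by_cases hn : n = 0
      · subst hn; simp [wt, sg]
      · have : sg (-(n:ℤ)) = sg n := by simp [sg]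
        simp [wt, hn, this, two_mul]
    · simp [sg]
  have h4 := h3.tendsto_sum_nat
  have h5 := h4.comp (tendsto_add_atTop_nat 1)
  refine tendsto_nhds_unique h1 ?_
  have h6 : Tendsto (fun N => SS ((X : ℤ⟦X⟧) ^ k) (fun m => vv (k * m)) N
      - ∑ j ∈ Finset.range (N+1), wt j * ((-1) ^ j * ((X : ℤ⟦X⟧) ^ k) ^ (j ^ 2))) atTop (𝓝 0) := by
    rw [tendsto_iff_coeff_tendsto]
    intro d
    refine tendsto_atTop_of_eventually_const (i₀ := d) fun N hN => ?_
    have := SS_dvd ((X : ℤ⟦X⟧) ^ k) (fun m => vv (k * m)) hv N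
    rw [← pow_mul] at this
    rw [X_pow_dvd_iff.1 this d (by nlinarith)]
    simp
  simpa [Function.comp_def] using h6.add h5

lemma hasProd_ww' (k : ℕ) (hk : 0 < k) :
    HasProd (fun i : ℕ => if k ∣ i + 1 then ww (i+1) else 1) (th sg k) := by
  have hinj : Function.Injective (fun i : ℕ => k * (i+1) - 1) := by
    intro a b h
    have ha : 0 < k * (a+1) := by positivity
    have hb : 0 < k * (b+1) := by positivity
    have h' : k * (a+1) = k * (b+1) := by simp only at h; omega
    have := Nat.eq_of_mul_eq_mul_left hk h'
    omega
  rw [← hinj.hasProd_iff]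
  · convert! hasProd_ww k hk using 2 with i
    have ha : 0 < k * (i+1) := by positivity
    simp [Nat.sub_add_cancel ha]
  · intro x hx
    rw [if_neg]
    rintro ⟨c, hc⟩
    apply hx
    refine ⟨c - 1, ?_⟩
    have : 0 < c := by rcases Nat.eq_zero_or_pos c with h | h; (subst h; omega); exact h
    simp only [Nat.sub_add_cancel this]; omega

end Theta
section Lattice
open PowerSeries PowerSeries.WithPiTopology Filter Topology

lemma sg_mul (x y : ℤ) : sg x * sg y = if Even (x + y) then 1 else -1 := by
  unfold sg
  by_cases hx : Even x <;> by_cases hy : Even y <;> simp [Int.even_add, hx, hy]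

lemma th_mul_th : th sg 1 * th (fun _ => 1) 1 = th sg 2 ^ 2 := by
  have h := hasSum_th_mul sg (fun _ => 1) 1 1 one_pos one_pos
  have ho : Summable (fun x : ℤ × ℤ => (monomial (1 * x.1.natAbs ^ 2 + 1 * x.2.natAbs ^ 2)
      (if Even (x.1 + x.2) then 0 else sg x.1) : ℤ⟦X⟧)) := summ _ _ (fin2 1 1 one_pos one_pos)
  obtain ⟨c, hc⟩ := ho
  have hc0 : c = 0 := by
    have h1 := (Equiv.prodComm ℤ ℤ).hasSum_iff.2 hc
    have h2 : HasSum (fun x : ℤ × ℤ => (monomial (1 * x.1.natAbs ^ 2 + 1 * x.2.natAbs ^ 2)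
      (if Even (x.1 + x.2) then 0 else sg x.1) : ℤ⟦X⟧)) (-c) := by
      convert! h1.neg using 2 with x
      obtain ⟨x, y⟩ := x
      simp only [Function.comp, Equiv.prodComm_apply, Prod.swap]
      rw [← map_neg, add_comm (1 * x.natAbs ^2), add_comm x]
      congr 1
      unfold sg
      split_ifs <;> grind
    have h3 := hc.unique h2
    have h4 : (2 : ℤ⟦X⟧) * c = 0 := by linear_combination h3
    have h5 : (2 : ℤ⟦X⟧) ≠ 0 := fun h => by
      have := congrArg (constantCoeff (R := ℤ)) h
      rw [map_ofNat] at this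
      simp at this
    exact (mul_eq_zero.1 h4).resolve_left h5
  subst hc0
  have he := h.sub hc
  rw [sub_zero] at he
  have hinj : Function.Injective (fun x : ℤ × ℤ => (x.1 + x.2, x.1 - x.2)) := by
    rintro ⟨a, b⟩ ⟨c, d⟩ h
    simp only [Prod.mk.injEq] at h ⊢
    omega
  rw [← hinj.hasSum_iff] at he
  · refine he.unique ?_
    rw [pow_two]
    convert! hasSum_th_mul sg sg 2 2 two_pos two_pos using 2 with x
    obtain ⟨x, y⟩ := x
    have e : 1 * (x + y).natAbs ^ 2 + 1 * (x - y).natAbs ^ 2 = 2 * x.natAbs ^ 2 + 2 * y.natAbs ^ 2 := by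
      zify; simp only [sq_abs]; ring
    simp only [Function.comp, e, sg_mul, ← map_sub]
    congr 1
    have : Even (x + y + (x - y)) := ⟨x, by ring⟩
    rw [if_pos this]
    simp [sg]
  · rintro ⟨x, y⟩ hx
    have : ¬ Even (x + y) := by
      rintro ⟨r, hr⟩
      exact hx ⟨(r, x - r), by simp only [Prod.mk.injEq]; omega⟩
    simp [this]

noncomputable def UU (A : ℤ⟦X⟧) : ℤ⟦X⟧ := PowerSeries.mk fun n => coeff (2 * n) A

lemma UU_mul_expand (A B : ℤ⟦X⟧) : UU (A * expand 2 two_ne_zero B) = UU A * B := by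
  have key : ∀ P Q : ℤ⟦X⟧, UU (expand 2 two_ne_zero P + X * expand 2 two_ne_zero Q) = P := by
    intro P Q
    ext n
    rw [UU, coeff_mk, map_add, coeff_expand_mul]
    rcases n with _ | n
    · simp
    · rw [show 2 * (n+1) = (2 * n + 1) + 1 by ring, coeff_succ_X_mul, coeff_expand_of_not_dvd _ _ _ (by omega), add_zero]
  have hA : A = expand 2 two_ne_zero (UU A)
      + X * expand 2 two_ne_zero (PowerSeries.mk fun n => coeff (2 * n + 1) A) := by
    ext n
    rw [map_add]
    rcases Nat.even_or_odd' n with ⟨m, rfl | rfl⟩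
    · rw [coeff_expand_mul]
      rcases m with _ | m
      · simp [UU]
      · rw [show 2 * (m+1) = (2 * m + 1) + 1 by ring, coeff_succ_X_mul, coeff_expand_of_not_dvd _ _ _ (by omega), add_zero]
        simp [UU, mul_add]
    · rw [coeff_succ_X_mul, coeff_expand_mul, coeff_expand_of_not_dvd _ _ _ (by omega)]
      simp
  set V := (PowerSeries.mk fun n => coeff (2 * n + 1) A)
  have : A * expand 2 two_ne_zero B = expand 2 two_ne_zero (UU A * B) + X * expand 2 two_ne_zero (V * B) := by
    rw [map_mul, map_mul]
    linear_combination (expand 2 two_ne_zero B) * hA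
  rw [this, key]

lemma hasSum_UU {ι : Type*} {f : ι → ℤ⟦X⟧} {a : ℤ⟦X⟧} (h : HasSum f a) :
    HasSum (fun i => UU (f i)) (UU a) := by
  rw [hasSum_iff_hasSum_coeff] at h ⊢
  intro d
  simpa [UU] using h (2 * d)

lemma UU_monomial (e : ℕ) (s : ℤ) :
    UU (monomial e s) = if 2 ∣ e then monomial (e / 2) s else 0 := by
  ext n
  rw [UU, coeff_mk, coeff_monomial]
  split_ifs with h1 h2 h2
  · rw [coeff_monomial, if_pos (by omega)]
  · omega
  · rw [coeff_monomial, if_neg (by omega)]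
  · simp

lemma UU_th : UU (th sg 3 * th (fun _ => 1) 1) = th sg 6 * th sg 2 := by
  have h := hasSum_UU (hasSum_th_mul sg (fun _ => 1) 3 1 (by norm_num) one_pos)
  obtain ⟨A, hA⟩ : Summable (fun x : ℤ × ℤ => (monomial (6 * x.1.natAbs ^ 2 + 2 * x.2.natAbs ^ 2)
      1 : ℤ⟦X⟧)) := summ _ _ (fin2 6 2 (by norm_num) two_pos)
  obtain ⟨B, hB⟩ : Summable (fun x : ℤ × ℤ => (monomial (6 * x.1.natAbs ^ 2 + 2 * x.2.natAbs ^ 2)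
      (if Even (x.1 + x.2) then 0 else -1) : ℤ⟦X⟧)) := summ _ _ (fin2 6 2 (by norm_num) two_pos)
  have hR : A + B + B = th sg 6 * th sg 2 := by
    refine HasSum.unique ((hA.add hB).add hB) ?_
    convert! hasSum_th_mul sg sg 6 2 (by norm_num) two_pos using 2 with x
    rw [sg_mul, ← map_add, ← map_add]
    congr 1
    split_ifs <;> norm_num
  rw [← hR]
  refine h.unique ?_
  let F : ℤ × ℤ → ℤ⟦X⟧ := fun x => UU (monomial (3 * x.1.natAbs ^ 2 + 1 * x.2.natAbs ^ 2)
      (sg x.1 * 1))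
  have hF : ∀ x y : ℤ, ∀ m : ℕ, 3 * x ^ 2 + y ^ 2 = 2 * m → F (x, y) = monomial m (sg x) := by
    intro x y m hm
    have e : 3 * x.natAbs ^ 2 + 1 * y.natAbs ^ 2 = 2 * m := by
      zify; simp only [sq_abs]; linarith
    simp only [F, UU_monomial, e]
    simp
  have hF0 : ∀ x y : ℤ, ¬ Even (x + y) → F (x, y) = 0 := by
    intro x y hxy
    simp only [F, UU_monomial]
    rw [if_neg]
    intro hd
    apply hxy
    have h2 : Even (3 * x.natAbs ^ 2 + 1 * y.natAbs ^ 2) := even_iff_two_dvd.2 hd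
    simp [Nat.even_add, Nat.even_mul, Nat.even_pow, Int.natAbs_even] at h2
    rw [Int.even_add, h2.symm]
    tauto
  have h1 : HasSum (fun x : ℤ × ℤ => if Even x.1 ∧ Even x.2 then F x else 0) A := by
    have hinj : Function.Injective (fun x : ℤ × ℤ => (2 * x.1, 2 * x.2)) := by
      rintro ⟨a, b⟩ ⟨c, d⟩ h
      simp only [Prod.mk.injEq] at h ⊢
      omega
    rw [← hinj.hasSum_iff]
    · convert! hA using 2 with x
      obtain ⟨u, v⟩ := x
      simp only [Function.comp]
      rw [if_pos (by simp), hF (2*u) (2*v) (6 * u.natAbs ^ 2 + 2 * v.natAbs ^ 2)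
        (by push_cast; simp only [sq_abs]; ring)]
      simp [sg]
    · rintro ⟨x, y⟩ hx
      rw [if_neg]
      rintro ⟨⟨a, ha⟩, ⟨b, hb⟩⟩
      exact hx ⟨(a, b), by simp only [Prod.mk.injEq] at *; omega⟩
  have h2 : HasSum (fun x : ℤ × ℤ => if Odd x.1 ∧ 4 ∣ x.1 + x.2 then F x else 0) B := by
    have hinj : Function.Injective (fun x : ℤ × ℤ => (x.2 - x.1, -x.2 - 3 * x.1)) := by
      rintro ⟨a, b⟩ ⟨c, d⟩ h
      simp only [Prod.mk.injEq] at h ⊢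
      omega
    rw [← hinj.hasSum_iff]
    · convert! hB using 2 with x
      obtain ⟨u, v⟩ := x
      simp only [Function.comp]
      rw [hF (v - u) (-v - 3 * u) (6 * u.natAbs ^ 2 + 2 * v.natAbs ^ 2)
        (by push_cast; simp only [sq_abs]; ring)]
      by_cases hp : Even (u + v)
      · rw [if_neg (by grind), if_pos hp]; simp
      · rw [if_pos (by constructor <;> grind), if_neg hp]
        congr 1
        unfold sg
        rw [if_neg (by grind)]
    · rintro ⟨x, y⟩ hx
      rw [if_neg]
      rintro ⟨_, ⟨b, hb⟩⟩
      exact hx ⟨(-b, x - b), by simp only [Prod.mk.injEq] at *; omega⟩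
  have h3 : HasSum (fun x : ℤ × ℤ => if Odd x.1 ∧ 4 ∣ x.2 - x.1 then F x else 0) B := by
    have hinj : Function.Injective (fun x : ℤ × ℤ => (-x.2 - x.1, 3 * x.1 - x.2)) := by
      rintro ⟨a, b⟩ ⟨c, d⟩ h
      simp only [Prod.mk.injEq] at h ⊢
      omega
    rw [← hinj.hasSum_iff]
    · convert! hB using 2 with x
      obtain ⟨u, v⟩ := x
      simp only [Function.comp]
      rw [hF (-v - u) (3 * u - v) (6 * u.natAbs ^ 2 + 2 * v.natAbs ^ 2)
        (by push_cast; simp only [sq_abs]; ring)]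
      by_cases hp : Even (u + v)
      · rw [if_neg (by grind), if_pos hp]; simp
      · rw [if_pos (by constructor <;> grind), if_neg hp]
        congr 1
        unfold sg
        rw [if_neg (by grind)]
    · rintro ⟨x, y⟩ hx
      rw [if_neg]
      rintro ⟨_, ⟨b, hb⟩⟩
      exact hx ⟨(b, -x - b), by simp only [Prod.mk.injEq] at *; omega⟩
  convert! (h1.add h2).add h3 using 2 with x
  obtain ⟨x, y⟩ := x
  change F (x, y) = _
  by_cases hxy : Even (x + y)
  · rcases Int.even_or_odd x with hx | hx
    · rw [if_pos, if_neg, if_neg] <;> simp <;> grind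
    · have hy : Odd y := by grind
      rw [if_neg (by grind)]
      by_cases h4 : 4 ∣ x + y
      · rw [if_pos ⟨hx, h4⟩, if_neg (by rintro ⟨-, h⟩; simp only at h; obtain ⟨a, ha⟩ := hx; omega)]
        simp
      · rw [if_neg (by rintro ⟨-, h⟩; exact h4 h), if_pos ⟨hx, by simp only; obtain ⟨a, ha⟩ := hx; obtain ⟨b, hb⟩ := hy; omega⟩]
        simp
  · rw [hF0 x y hxy]; simp

end Lattice
section Final
open PowerSeries PowerSeries.WithPiTopology Filter Topology

lemma tsum_eq_vv (m : ℕ) (hm : 0 < m) : ∑' j : ℕ, (X : ℤ⟦X⟧) ^ (m * j) = vv m := by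
  simp_rw [pow_mul]
  have h := tsum_pow_mul_one_sub_of_constantCoeff_eq_zero (f := (X : ℤ⟦X⟧) ^ m) (by simp [hm.ne'])
  have h2 := vv_mul m hm
  linear_combination vv m * h - (∑' j : ℕ, ((X : ℤ⟦X⟧) ^ m) ^ j) * h2

lemma gf_restricted (P : ℕ → Prop) [DecidablePred P] :
    HasProd (fun i => if P (i+1) then vv (i+1) else 1)
      (PowerSeries.mk fun n => ((Fintype.card {p : n.Partition // ∀ i ∈ p.parts, P i} : ℕ) : ℤ)) := by
  convert! Nat.Partition.hasProd_powerSeriesMk_card_restricted ℤ P using 1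
  · ext1 i
    rw [tsum_eq_vv _ (by omega)]
  · ext n
    simp only [coeff_mk]
    rw [Fintype.card_subtype]; rfl

lemma gf_distinct (P : ℕ → Prop) [DecidablePred P] :
    HasProd (fun i => if P (i+1) then 1 + X ^ (i+1) else 1)
      (PowerSeries.mk fun n => ((Fintype.card
        {p : n.Partition // p.parts.Nodup ∧ ∀ i ∈ p.parts, P i} : ℕ) : ℤ)) := by
  convert! Nat.Partition.hasProd_genFun (fun i c ↦ if P i ∧ c ≤ 1 then (1 : ℤ) else 0) using 1
  · ext1 i
    rw [tsum_eq_single 0 (by intro b hb; rw [if_neg (by omega)]; exact zero_smul ℤ _)]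
    by_cases hP : P (i+1)
    · simp only [hP, if_true, zero_add, le_refl, and_self, mul_one]
      exact congrArg _ (one_smul ℤ _).symm
    · simp only [hP, if_false, false_and]
      exact ((congrArg _ (zero_smul ℤ _)).trans (add_zero _)).symm
  · simp_rw [Nat.Partition.genFun, Fintype.card_subtype, Finset.card_filter, Finsupp.prod, Finset.prod_boole]
    ext n
    simp only [coeff_mk]
    push_cast
    refine Finset.sum_congr rfl fun p _ => ?_
    congr 1
    simp only [Multiset.toFinsupp_support, Multiset.mem_toFinset, Multiset.toFinsupp_apply,
      Multiset.nodup_iff_count_le_one, eq_iff_iff]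
    constructor
    · rintro ⟨h1, h2⟩ i hi; exact ⟨h2 i hi, h1 i⟩
    · intro h
      refine ⟨fun i => ?_, fun i hi => (h i hi).1⟩
      by_cases hi : i ∈ p.parts
      · exact (h i hi).2
      · rw [Multiset.count_eq_zero_of_notMem hi]; omega

lemma key_ww (m : ℕ) (hm : 0 < m) : vv m * (1 + X ^ m) * ww m = 1 := by
  unfold ww
  linear_combination (pv m * (1 + X^m)) * vv_mul m hm + pv_mul m hm

lemma gf_R : (PowerSeries.mk fun n => (Rbar 4 3 n : ℤ)) * th sg 1 * th sg 12 = th sg 4 * th sg 3 := by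
  have h := (gf_restricted (fun i => ¬ 4 ∣ i ∧ ¬ 3 ∣ i)).mul (gf_distinct (fun i => ¬ 4 ∣ i ∧ ¬ 3 ∣ i))
  have e : (PowerSeries.mk fun n => (Rbar 4 3 n : ℤ)) =
      (PowerSeries.mk fun n => (regularCount 4 3 n : ℤ)) * (PowerSeries.mk fun n => (regularDistinctCount 4 3 n : ℤ)) := by
    ext n
    rw [coeff_mul]
    simp only [coeff_mk, Rbar]
    push_cast
    rfl
  change HasProd _ ((PowerSeries.mk fun n => (regularCount 4 3 n : ℤ)) * (PowerSeries.mk fun n => (regularDistinctCount 4 3 n : ℤ))) at h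
  rw [← e] at h
  have hL := (h.mul (hasProd_ww' 1 one_pos)).mul (hasProd_ww' 12 (by norm_num))
  have hR := (hasProd_ww' 4 (by norm_num)).mul (hasProd_ww' 3 (by norm_num))
  refine hL.unique ?_
  convert! hR using 2 with i
  have hk := key_ww (i+1) (by omega)
  by_cases h4 : 4 ∣ i + 1 <;> by_cases h3 : 3 ∣ i + 1
  · have : 12 ∣ i + 1 := by omega
    simp [h4, h3, this]
  · have : ¬ 12 ∣ i + 1 := by omega
    simp [h4, h3, this]
  · have : ¬ 12 ∣ i + 1 := by omega
    simp [h4, h3, this]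
  · have : ¬ 12 ∣ i + 1 := by omega
    simp [h4, h3, this, hk]

lemma gf_O : (PowerSeries.mk fun n => (overOdd n : ℤ)) * th sg 1 = th sg 2 := by
  have h := (gf_restricted (fun i => Odd i)).mul (gf_distinct (fun i => Odd i))
  have e : (PowerSeries.mk fun n => (overOdd n : ℤ)) =
      (PowerSeries.mk fun n => (oddCount n : ℤ)) * (PowerSeries.mk fun n => (oddDistinctCount n : ℤ)) := by
    ext n
    rw [coeff_mul]
    simp only [coeff_mk, overOdd]
    push_cast
    rfl
  change HasProd _ ((PowerSeries.mk fun n => (oddCount n : ℤ)) * (PowerSeries.mk fun n => (oddDistinctCount n : ℤ))) at h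
  rw [← e] at h
  refine (h.mul (hasProd_ww' 1 one_pos)).unique ?_
  convert! hasProd_ww' 2 two_pos using 2 with i
  have hk := key_ww (i+1) (by omega)
  by_cases h2 : 2 ∣ i + 1
  · have : ¬ Odd (i+1) := by rw [Nat.not_odd_iff_even]; exact even_iff_two_dvd.2 h2
    rw [if_neg this, if_neg this, if_pos h2, if_pos (one_dvd _)]; ring
  · have : Odd (i+1) := by rw [← Nat.not_even_iff_odd]; exact fun h => h2 (even_iff_two_dvd.1 h)
    rw [if_pos this, if_pos this, if_neg h2, if_pos (one_dvd _), hk]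

lemma gf_main : UU (PowerSeries.mk fun n => (Rbar 4 3 n : ℤ))
    = (PowerSeries.mk fun n => (overOdd n : ℤ)) ^ 2 := by
  set G := (PowerSeries.mk fun n => (Rbar 4 3 n : ℤ))
  set O := (PowerSeries.mk fun n => (overOdd n : ℤ))
  have h1 : G * expand 2 two_ne_zero (th sg 1 ^ 2 * th sg 6)
      = (th sg 3 * th (fun _ => 1) 1) * expand 2 two_ne_zero (th sg 2) := by
    rw [map_mul, map_pow, expand_th _ _ one_pos, expand_th _ _ two_pos, expand_th _ _ (by norm_num)]
    norm_num only
    rw [← th_mul_th]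
    linear_combination th (fun _ => 1) 1 * gf_R
  have h2 := congrArg UU h1
  rw [UU_mul_expand, UU_mul_expand, UU_th] at h2
  have hne : th sg 1 ^ 2 * th sg 6 ≠ 0 :=
    mul_ne_zero (pow_ne_zero _ (th_ne_zero 1 one_pos)) (th_ne_zero 6 (by norm_num))
  apply mul_right_cancel₀ hne
  rw [h2, ← gf_O]
  ring

end Final

theorem Rbar_four_three_eq_ppo (n : ℕ) :
    Rbar 4 3 (2 * n) = ppo n := by
  have h := congrArg (PowerSeries.coeff n) gf_main
  rw [pow_two, PowerSeries.coeff_mul] at h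
  simp only [UU, PowerSeries.coeff_mk] at h
  unfold ppo
  exact_mod_cast h
end
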